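/- Let Re Ω₀ = e^{135} − e^{146} − e^{236} − e^{245} on ℝ^6, the real part of the standard complex volume form Ω₀ = (e^1 + ie^2) ∧ (e^3 + ie^4) ∧ (e^5 + ie^6). Then the GL(6, ℝ)-orbit of Re Ω₀ is open in the space of alternating 3-forms on ℝ^6: the set { σ : σ(v₁, v₂, v₃) = Re Ω₀(A v₁, A v₂, A v₃) for some invertible linear map A : ℝ^6 → ℝ^6 } is an open subset of the vector space of alternating 3-linear maps (ℝ^6)³ → ℝ. In other words, Re Ω₀ is a stable 3-form. -/

import Mathlib

noncomputable section

/-- The basic alternating 3-form `e^i ∧ e^j ∧ e^k` on `ℝ^6` (determinant convention). -/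
def form3 (i j k : Fin 6) : (Fin 3 → EuclideanSpace ℝ (Fin 6)) → ℝ :=
  fun v => Matrix.det !![v 0 i, v 0 j, v 0 k; v 1 i, v 1 j, v 1 k; v 2 i, v 2 j, v 2 k]

/-- `Re Ω₀ = e^{135} − e^{146} − e^{236} − e^{245}` (indices shifted to `0,…,5`), the real part
of the standard complex volume form on `ℝ^6`. -/
def reOmega0 : (Fin 3 → EuclideanSpace ℝ (Fin 6)) → ℝ :=
  fun v => form3 0 2 4 v - form3 0 3 5 v - form3 1 2 5 v - form3 1 3 4 v

/-- Alternating maps on an ordered basis are determined by strictly increasing index tuples. -/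
theorem ext_alternating_of_strictMono {R M N ι : Type*} [CommRing R] [AddCommGroup M] [Module R M]
    [AddCommGroup N] [Module R N] [LinearOrder ι] {n : ℕ} {f g : M [⋀^Fin n]→ₗ[R] N}
    (e : Module.Basis ι R M)
    (h : ∀ v : Fin n → ι, StrictMono v → (f fun i => e (v i)) = g fun i => e (v i)) :
    f = g := by
  refine e.ext_alternating fun v hv => ?_
  have hs : StrictMono (v ∘ Tuple.sort v) :=
    (Tuple.monotone_sort v).strictMono_of_injective (hv.comp (Tuple.sort v).injective)
  have := h _ hs
  change f ((fun i => e (v i)) ∘ Tuple.sort v) = g ((fun i => e (v i)) ∘ Tuple.sort v) at this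
  rw [f.map_perm, g.map_perm] at this
  exact MulAction.injective _ this

/-- `form3` as an alternating map. -/
def form3Alternating (i j k : Fin 6) : EuclideanSpace ℝ (Fin 6) [⋀^Fin 3]→ₗ[ℝ] ℝ :=
  (Matrix.detRowAlternating (R := ℝ) (n := Fin 3)).compLinearMap
    (LinearMap.pi fun a => (EuclideanSpace.proj (![i, j, k] a) : _ →L[ℝ] ℝ).toLinearMap)

theorem form3Alternating_apply (i j k : Fin 6) (v : Fin 3 → EuclideanSpace ℝ (Fin 6)) :
    form3Alternating i j k v = form3 i j k v := by
  refine congrArg Matrix.det (?_ : (_ : Matrix (Fin 3) (Fin 3) ℝ) = _)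
  ext a b
  fin_cases a <;> fin_cases b <;> rfl

/-- `Re Ω₀` as a continuous alternating map. -/
def reOmega0Form : EuclideanSpace ℝ (Fin 6) [⋀^Fin 3]→L[ℝ] ℝ where
  __ := form3Alternating 0 2 4 - form3Alternating 0 3 5 - form3Alternating 1 2 5
    - form3Alternating 1 3 4
  cont := by
    change Continuous fun v => form3Alternating 0 2 4 v - form3Alternating 0 3 5 v
      - form3Alternating 1 2 5 v - form3Alternating 1 3 4 v
    simp only [form3Alternating_apply, form3, Matrix.det_fin_three]
    simp only [Matrix.of_apply, Matrix.cons_val]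
    fun_prop

theorem reOmega0Form_apply (v : Fin 3 → EuclideanSpace ℝ (Fin 6)) :
    reOmega0Form v = reOmega0 v := by
  change form3Alternating 0 2 4 v - form3Alternating 0 3 5 v
      - form3Alternating 1 2 5 v - form3Alternating 1 3 4 v = _
  simp only [form3Alternating_apply, reOmega0]

/-- A matrix whose infinitesimal action sends `Re Ω₀` to the 3-form with coefficients `c`. -/
def infinitesimalPreimage (c : Fin 6 → Fin 6 → Fin 6 → ℝ) : Matrix (Fin 6) (Fin 6) ℝ :=
  let x := (c 0 2 4 - c 0 3 5 + c 1 2 5 + c 1 3 4) / 2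
  let y := (c 0 3 4 + c 1 2 4 - c 1 3 5 - c 0 2 5) / 2
  !![x, y, -c 2 3 5, -c 2 3 4, c 3 4 5, c 2 4 5;
    -c 0 3 4, 0, 0, 0, 0, 0;
    c 0 1 5, c 0 1 4, -c 1 2 5, 0, -c 1 4 5, -c 0 4 5;
    0, 0, y - c 1 2 4, -c 0 3 5 - x, 0, 0;
    -c 0 1 3, -c 0 1 2, c 1 2 3, c 0 2 3, -c 1 3 4 + c 0 3 5 + x, -y - c 1 3 5;
    0, 0, 0, 0, 0, 0]

/-- The infinitesimal action of `𝔤𝔩(6, ℝ)` on `Re Ω₀` fills the space of 3-forms. -/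
theorem range_fderivCompContinuousLinearMap_reOmega0Form :
    (reOmega0Form.fderivCompContinuousLinearMap
      (ContinuousLinearMap.id ℝ (EuclideanSpace ℝ (Fin 6)))).range = ⊤ := by
  refine LinearMap.range_eq_top.2 fun σ => ?_
  let e := (EuclideanSpace.basisFun (Fin 6) ℝ).toBasis
  let c : Fin 6 → Fin 6 → Fin 6 → ℝ := fun i j k => σ ![e i, e j, e k]
  let X := (Matrix.toEuclideanLin (infinitesimalPreimage c)).toContinuousLinearMap
  have hX (a b : Fin 6) : X (e b) a = infinitesimalPreimage c a b := by
    simp [X, e, Matrix.toLpLin_apply]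
  have he (a b : Fin 6) : e b a = if a = b then 1 else 0 := by
    simp [e]
  refine ⟨X, ContinuousAlternatingMap.toAlternatingMap_injective ?_⟩
  refine ext_alternating_of_strictMono e fun v hv => ?_
  have hσ : σ (fun i => e (v i)) = c (v 0) (v 1) (v 2) := by
    change _ = σ _
    congr 1
    ext i
    fin_cases i <;> rfl
  change reOmega0Form.fderivCompContinuousLinearMap _ X (fun i => e (v i)) = σ (fun i => e (v i))
  have h01 : v 0 < v 1 := hv (by decide)
  have h12 : v 1 < v 2 := hv (by decide)
  rw [hσ, ContinuousAlternatingMap.fderivCompContinuousLinearMap_apply]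
  simp only [reOmega0Form_apply, reOmega0, form3, Matrix.det_fin_three, Fin.sum_univ_three,
    Matrix.of_apply, Matrix.cons_val]
  simp only [Function.update, Fin.isValue, Fin.reduceEq, ↓reduceDIte,
    ContinuousLinearMap.id_apply, hX, he]
  generalize v 0 = i, v 1 = j, v 2 = k at h01 h12
  fin_cases i <;> fin_cases j <;> first | (exact absurd h01 (by decide)) | skip
  all_goals fin_cases k <;> first | (exact absurd h12 (by decide)) | skip
  all_goals simp [infinitesimalPreimage]
  all_goals ring

/-- The pullbacks of `Re Ω₀` by invertible operators form a neighbourhood of `Re Ω₀`. -/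
theorem image_isUnit_compContinuousLinearMap_mem_nhds :
    reOmega0Form.compContinuousLinearMap ''
      {X : EuclideanSpace ℝ (Fin 6) →L[ℝ] EuclideanSpace ℝ (Fin 6) | IsUnit X} ∈
        nhds reOmega0Form := by
  have hd : HasStrictFDerivAt
      (fun X : EuclideanSpace ℝ (Fin 6) →L[ℝ] EuclideanSpace ℝ (Fin 6) =>
        reOmega0Form.compContinuousLinearMap X)
      (reOmega0Form.fderivCompContinuousLinearMap (ContinuousLinearMap.id ℝ _))
      (ContinuousLinearMap.id ℝ _) := by
    simpa using (hasStrictFDerivAt_const reOmega0Form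
      (ContinuousLinearMap.id ℝ _)).continuousAlternatingMapCompContinuousLinearMap
        (hasStrictFDerivAt_id (𝕜 := ℝ)
          (ContinuousLinearMap.id ℝ (EuclideanSpace ℝ (Fin 6))))
  have hm := hd.map_nhds_eq_of_surj range_fderivCompContinuousLinearMap_reOmega0Form
  have hid : reOmega0Form.compContinuousLinearMap (ContinuousLinearMap.id ℝ _) = reOmega0Form :=
    rfl
  rw [hid] at hm
  rw [← hm]
  exact Filter.image_mem_map (Units.nhds 1)

/-- The `GL(6, ℝ)`-orbit of `Re Ω₀` is open in the space of alternating
3-forms on `ℝ^6`: `Re Ω₀` is a stable 3-form. -/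
theorem statement17 :
    IsOpen {σ : ContinuousAlternatingMap ℝ (EuclideanSpace ℝ (Fin 6)) ℝ (Fin 3) |
      ∃ A : EuclideanSpace ℝ (Fin 6) →ₗ[ℝ] EuclideanSpace ℝ (Fin 6),
        Function.Bijective A ∧
          ∀ v : Fin 3 → EuclideanSpace ℝ (Fin 6), σ v = reOmega0 (fun i => A (v i))} := by
  rw [isOpen_iff_mem_nhds]
  rintro σ ⟨A, hA, hσ⟩
  let B := (LinearEquiv.ofBijective A hA).toContinuousLinearEquiv
  let P := ContinuousAlternatingMap.compContinuousLinearMapCLM (ι := Fin 3) (F := ℝ)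
    (B.symm : EuclideanSpace ℝ (Fin 6) →L[ℝ] EuclideanSpace ℝ (Fin 6))
  have hP : P σ = reOmega0Form := by
    ext v
    have hAB (x) : A (B.symm x) = x := B.apply_symm_apply x
    change σ (fun i => B.symm (v i)) = _
    simp only [hσ, hAB, reOmega0Form_apply]
  have hN := image_isUnit_compContinuousLinearMap_mem_nhds
  rw [← hP] at hN
  filter_upwards [P.continuous.continuousAt.preimage_mem_nhds hN]
  rintro τ ⟨X, hX, hτ⟩
  rw [hP] at hτ
  refine ⟨X.toLinearMap ∘ₗ A, ?_, fun v => ?_⟩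
  · exact ((Module.End.isUnit_iff _).1 (hX.map ContinuousLinearMap.toLinearMapRingHom)).comp hA
  · have h := DFunLike.congr_fun hτ fun i => A (v i)
    have hBA (x) : B.symm (A x) = x := B.symm_apply_apply x
    change reOmega0Form (fun i => X (A (v i))) = τ (fun i => B.symm (A (v i))) at h
    simp only [hBA, reOmega0Form_apply] at h
    exact h.symm
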